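/- Let V be a random vector uniformly distributed on the sphere of radius r > 0 in ℝ³. Then each coordinate of V is uniformly distributed on the interval [−r, r] (Archimedes' theorem). -/

import Mathlib

open MeasureTheory Metric

/-!
Let `μ` be a measure on the sphere of radius `r` in dimension `n + 1` that is invariant under linear
isometries, and let `u`, `v` be orthonormal. Reflecting the plane of `u` and `v` in the line at
angle `θ / 2` from `u` shows that
`∫ (sin θ * ⟪u, x⟫ - cos θ * ⟪v, x⟫) * g (cos θ * ⟪u, x⟫ + sin θ * ⟪v, x⟫) ∂μ` does not depend on
`θ`. Its derivative at `θ = 0` vanishes, which says that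
`∫ ⟪v, x⟫ ^ 2 * g' ⟪u, x⟫ ∂μ = ∫ ⟪u, x⟫ * g ⟪u, x⟫ ∂μ`. Summing over the `n` vectors `v` that
complete `u` to an orthonormal basis and taking `g t = t ^ (k + 1)` yields a recursion for the
moments of `⟪u, x⟫`. For `n = 2` it is the recursion of the moments of the uniform distribution on
`[-r, r]`, and a compactly supported measure on the line is determined by its moments.

The Hausdorff measure of the sphere is finite because inverse stereographic projections are locally
Lipschitz, and positive because the orthogonal projection to a hyperplane is `1`-Lipschitz.
-/

open Module Set
open scoped RealInnerProductSpace ProbabilityTheory ENNReal Pointwise Topology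

section CompactSupport

variable {X F : Type*} [TopologicalSpace X] [T2Space X] [MeasurableSpace X]
  [OpensMeasurableSpace X] {μ : Measure X} [IsFiniteMeasure μ] {K : Set X} [NormedAddCommGroup F]

theorem integrable_of_continuous_of_ae_mem_isCompact (hK : IsCompact K)
    (hμK : ∀ᵐ x ∂μ, x ∈ K) {f : X → F} (hf : Continuous f) : Integrable f μ := by
  simpa only [IntegrableOn, Measure.restrict_eq_self_of_ae_mem hμK]
    using hf.continuousOn.integrableOn_compact (μ := μ) hK

theorem hasDerivAt_integral_of_ae_mem_isCompact [NormedSpace ℝ F] (hK : IsCompact K)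
    (hμK : ∀ᵐ x ∂μ, x ∈ K) {f f' : ℝ → X → F}
    (hf : ∀ s, Continuous (f s)) (hf' : Continuous (Function.uncurry f'))
    (hff' : ∀ s x, HasDerivAt (f · x) (f' s x) s) (s : ℝ) :
    HasDerivAt (fun s ↦ ∫ x, f s x ∂μ) (∫ x, f' s x ∂μ) s := by
  obtain ⟨C, hC⟩ := ((isCompact_closedBall s 1).prod hK).exists_bound_of_continuousOn
    hf'.continuousOn
  refine (hasDerivAt_integral_of_dominated_loc_of_deriv_le (bound := fun _ ↦ C)
    (closedBall_mem_nhds s one_pos) (.of_forall fun s ↦ ?_) ?_ ?_ ?_ (integrable_const C)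
    (.of_forall fun x s _ ↦ hff' s x)).2
  · exact (integrable_of_continuous_of_ae_mem_isCompact hK hμK (hf s)).aestronglyMeasurable
  · exact integrable_of_continuous_of_ae_mem_isCompact hK hμK (hf s)
  · exact (integrable_of_continuous_of_ae_mem_isCompact hK hμK
      (hf'.uncurry_left s)).aestronglyMeasurable
  · filter_upwards [hμK] with x hx t ht using hC (t, x) ⟨ht, hx⟩

end CompactSupport

theorem integral_eq_zero_of_odd {G F : Type*} [AddGroup G] [MeasurableSpace G] [MeasurableNeg G]
    {μ : Measure G} [μ.IsNegInvariant] [NormedAddCommGroup F] [NormedSpace ℝ F] {f : G → F}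
    (hf : f.Odd) : ∫ x, f x ∂μ = 0 := by
  have : IsAddTorsionFree F := .of_isTorsionFree ℝ F
  have h := integral_neg_eq_self f μ
  simp only [hf _, integral_neg] at h
  exact self_eq_neg.1 h.symm

section Moments

theorem integral_eval_eq_of_forall_integral_pow_eq {P Q : Measure ℝ}
    (hP : ∀ n : ℕ, Integrable (fun t ↦ t ^ n) P) (hQ : ∀ n : ℕ, Integrable (fun t ↦ t ^ n) Q)
    (h : ∀ n : ℕ, ∫ t, t ^ n ∂P = ∫ t, t ^ n ∂Q) (p : Polynomial ℝ) :
    ∫ t, p.eval t ∂P = ∫ t, p.eval t ∂Q := by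
  simp only [Polynomial.eval_eq_sum_range]
  rw [integral_finsetSum _ fun n _ ↦ (hP n).const_mul _,
    integral_finsetSum _ fun n _ ↦ (hQ n).const_mul _]
  simp only [integral_const_mul, h]

theorem measure_ext_of_forall_integral_pow_eq {P Q : Measure ℝ} [IsFiniteMeasure P]
    [IsFiniteMeasure Q] {a b : ℝ} (hP : ∀ᵐ t ∂P, t ∈ Icc a b) (hQ : ∀ᵐ t ∂Q, t ∈ Icc a b)
    (h : ∀ n : ℕ, ∫ t, t ^ n ∂P = ∫ t, t ^ n ∂Q) : P = Q := by
  refine ext_of_forall_integral_eq_of_IsFiniteMeasure fun f ↦ eq_of_forall_dist_le fun ε hε ↦ ?_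
  obtain ⟨δ, hδ, hδε⟩ := exists_pos_mul_lt hε (P.real univ + Q.real univ)
  obtain ⟨p, hp⟩ := exists_polynomial_near_of_continuousOn a b f f.continuous.continuousOn δ hδ
  have dist_integral_le {ν : Measure ℝ} [IsFiniteMeasure ν] (hν : ∀ᵐ t ∂ν, t ∈ Icc a b) :
      dist (∫ t, p.eval t ∂ν) (∫ t, f t ∂ν) ≤ δ * ν.real univ := by
    rw [dist_eq_norm, ← integral_sub
      (integrable_of_continuous_of_ae_mem_isCompact isCompact_Icc hν p.continuous)
      (integrable_of_continuous_of_ae_mem_isCompact isCompact_Icc hν f.continuous)]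
    exact norm_integral_le_of_norm_le_const (hν.mono fun t ht ↦ (hp t ht).le)
  have integral_eq : ∫ t, p.eval t ∂P = ∫ t, p.eval t ∂Q :=
    integral_eval_eq_of_forall_integral_pow_eq
      (fun n ↦ integrable_of_continuous_of_ae_mem_isCompact isCompact_Icc hP (continuous_pow n))
      (fun n ↦ integrable_of_continuous_of_ae_mem_isCompact isCompact_Icc hQ (continuous_pow n))
      h p
  calc dist (∫ t, f t ∂P) (∫ t, f t ∂Q)
      ≤ dist (∫ t, p.eval t ∂P) (∫ t, f t ∂P) + dist (∫ t, p.eval t ∂Q) (∫ t, f t ∂Q) := by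
        rw [integral_eq]; exact dist_triangle_left _ _ _
    _ ≤ δ * P.real univ + δ * Q.real univ := add_le_add (dist_integral_le hP) (dist_integral_le hQ)
    _ = (P.real univ + Q.real univ) * δ := by ring
    _ ≤ ε := hδε.le

theorem integral_pow_cond_Icc {a b : ℝ} (hab : a < b) (n : ℕ) :
    ∫ t, t ^ n ∂(volume[|Icc a b]) = (b ^ (n + 1) - a ^ (n + 1)) / ((b - a) * (n + 1)) := by
  rw [ProbabilityTheory.cond, integral_smul_measure, integral_Icc_eq_integral_Ioc,
    ← intervalIntegral.integral_of_le hab.le, integral_pow, Real.volume_Icc, ENNReal.toReal_inv,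
    ENNReal.toReal_ofReal (sub_nonneg.2 hab.le), smul_eq_mul]
  field_simp

end Moments

section InnerProductSpace

variable {E : Type*} [NormedAddCommGroup E] [InnerProductSpace ℝ E]

theorem exists_linearIsometryEquiv_inner_eq {u v : E} (hu : ‖u‖ = 1) (hv : ‖v‖ = 1)
    (huv : ⟪u, v⟫ = 0) (θ : ℝ) :
    ∃ e : E ≃ₗᵢ[ℝ] E, ∀ x, ⟪u, e x⟫ = Real.cos θ * ⟪u, x⟫ + Real.sin θ * ⟪v, x⟫ ∧
      ⟪v, e x⟫ = Real.sin θ * ⟪u, x⟫ - Real.cos θ * ⟪v, x⟫ := by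
  obtain ⟨φ, rfl⟩ : ∃ φ, θ = 2 * φ := ⟨θ / 2, by ring⟩
  have hvu : ⟪v, u⟫ = 0 := by rw [real_inner_comm, huv]
  let w := Real.cos φ • u + Real.sin φ • v
  have huw : ⟪u, w⟫ = Real.cos φ := by simp [w, inner_add_right, inner_smul_right, hu, huv]
  have hvw : ⟪v, w⟫ = Real.sin φ := by simp [w, inner_add_right, inner_smul_right, hv, hvu]
  have hwx (x : E) : ⟪w, x⟫ = Real.cos φ * ⟪u, x⟫ + Real.sin φ * ⟪v, x⟫ := by
    simp [w, inner_add_left, inner_smul_left]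
  have hw : ‖w‖ ^ 2 = 1 := by
    rw [← real_inner_self_eq_norm_sq, hwx, huw, hvw, ← sq, ← sq, Real.cos_sq_add_sin_sq]
  have hreflection (x : E) : (ℝ ∙ w).reflection x = (2 * ⟪w, x⟫) • w - x := by
    rw [Submodule.reflection_singleton_apply, RCLike.ofReal_real_eq_id, id_eq, hw, div_one,
      ← ofNat_smul_eq_nsmul ℝ, smul_smul]
  refine ⟨(ℝ ∙ w).reflection, fun x ↦ ?_⟩
  rw [hreflection, inner_sub_right, inner_sub_right, inner_smul_right, inner_smul_right, huw, hvw,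
    hwx, Real.cos_two_mul', Real.sin_two_mul]
  constructor
  · linear_combination ⟪u, x⟫ * Real.sin_sq_add_cos_sq φ
  · linear_combination ⟪v, x⟫ * Real.sin_sq_add_cos_sq φ

variable [MeasurableSpace E] [BorelSpace E] {μ : Measure E}

theorem integral_inner_sq_mul_deriv_inner [IsFiniteMeasure μ] {K : Set E} (hK : IsCompact K)
    (hμK : ∀ᵐ x ∂μ, x ∈ K) (hinv : ∀ e : E ≃ₗᵢ[ℝ] E, MeasurePreserving e μ μ)
    {u v : E} (hu : ‖u‖ = 1) (hv : ‖v‖ = 1) (huv : ⟪u, v⟫ = 0)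
    {g : ℝ → ℝ} (hg : ContDiff ℝ 1 g) :
    ∫ x, ⟪v, x⟫ ^ 2 * deriv g ⟪u, x⟫ ∂μ = ∫ x, ⟪u, x⟫ * g ⟪u, x⟫ ∂μ := by
  let F (θ : ℝ) (x : E) : ℝ := (Real.sin θ * ⟪u, x⟫ - Real.cos θ * ⟪v, x⟫) *
    g (Real.cos θ * ⟪u, x⟫ + Real.sin θ * ⟪v, x⟫)
  let F' (θ : ℝ) (x : E) : ℝ :=
    (Real.cos θ * ⟪u, x⟫ + Real.sin θ * ⟪v, x⟫) * g (Real.cos θ * ⟪u, x⟫ + Real.sin θ * ⟪v, x⟫) -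
    (Real.sin θ * ⟪u, x⟫ - Real.cos θ * ⟪v, x⟫) ^ 2 *
      deriv g (Real.cos θ * ⟪u, x⟫ + Real.sin θ * ⟪v, x⟫)
  have : Continuous g := hg.continuous
  have : Continuous (deriv g) := hg.continuous_deriv le_rfl
  have hFF' (θ : ℝ) (x : E) : HasDerivAt (F · x) (F' θ x) θ := by
    have hsin := Real.hasDerivAt_sin θ
    have hcos := Real.hasDerivAt_cos θ
    have hu' := (hcos.mul_const ⟪u, x⟫).add (hsin.mul_const ⟪v, x⟫)
    have hv' := (hsin.mul_const ⟪u, x⟫).sub (hcos.mul_const ⟪v, x⟫)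
    have hgu := ((hg.differentiable one_ne_zero).differentiableAt.hasDerivAt).comp θ hu'
    convert! hv'.mul hgu using 1
    simp only [F', Function.comp_apply, Pi.add_apply, Pi.sub_apply]
    ring
  have hderiv := hasDerivAt_integral_of_ae_mem_isCompact hK hμK
    (fun θ ↦ by fun_prop) (by fun_prop) hFF' 0
  have hconst (θ : ℝ) : ∫ x, F θ x ∂μ = ∫ x, ⟪v, x⟫ * g ⟪u, x⟫ ∂μ := by
    obtain ⟨e, he⟩ := exists_linearIsometryEquiv_inner_eq hu hv huv θ
    simpa only [he] using (hinv e).integral_comp e.toHomeomorph.measurableEmbedding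
      fun x ↦ ⟪v, x⟫ * g ⟪u, x⟫
  have hzero : ∫ x, F' 0 x ∂μ = 0 := by
    simp only [hconst] at hderiv
    exact hderiv.unique (hasDerivAt_const _ _)
  simp only [F', Real.cos_zero, Real.sin_zero, one_mul, zero_mul, add_zero, zero_sub, neg_sq]
    at hzero
  rw [integral_sub (integrable_of_continuous_of_ae_mem_isCompact hK hμK (by fun_prop))
    (integrable_of_continuous_of_ae_mem_isCompact hK hμK (by fun_prop)), sub_eq_zero] at hzero
  exact hzero.symm

variable {r : ℝ} {n : ℕ}

theorem integral_sq_sub_sq_inner_mul_deriv_inner [IsFiniteMeasure μ]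
    (hμ : ∀ᵐ x ∂μ, x ∈ sphere 0 r) (hinv : ∀ e : E ≃ₗᵢ[ℝ] E, MeasurePreserving e μ μ)
    (hn : finrank ℝ E = n + 1) {u : E} (hu : ‖u‖ = 1) {g : ℝ → ℝ} (hg : ContDiff ℝ 1 g) :
    ∫ x, (r ^ 2 - ⟪u, x⟫ ^ 2) * deriv g ⟪u, x⟫ ∂μ = n * ∫ x, ⟪u, x⟫ * g ⟪u, x⟫ ∂μ := by
  have : FiniteDimensional ℝ E := .of_finrank_eq_succ hn
  have : Continuous (deriv g) := hg.continuous_deriv le_rfl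
  obtain ⟨b, hb⟩ := Orthonormal.exists_orthonormalBasis_extension_of_card_eq (𝕜 := ℝ)
    (ι := Fin (n + 1)) (by simp [hn]) (v := fun _ ↦ u) (s := {0})
    ⟨fun _ ↦ hu, Subsingleton.pairwise⟩
  obtain rfl : b 0 = u := hb 0 rfl
  calc ∫ x, (r ^ 2 - ⟪b 0, x⟫ ^ 2) * deriv g ⟪b 0, x⟫ ∂μ
      = ∫ x, ∑ i : Fin n, ⟪b i.succ, x⟫ ^ 2 * deriv g ⟪b 0, x⟫ ∂μ := by
        refine integral_congr_ae ?_
        filter_upwards [hμ] with x hx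
        have hpythagoras := b.sum_sq_inner_right x
        rw [mem_sphere_zero_iff_norm.1 hx, Fin.sum_univ_succ] at hpythagoras
        rw [← hpythagoras, add_sub_cancel_left, Finset.sum_mul]
    _ = ∑ i : Fin n, ∫ x, ⟪b i.succ, x⟫ ^ 2 * deriv g ⟪b 0, x⟫ ∂μ :=
        integral_finsetSum _ fun i _ ↦
          integrable_of_continuous_of_ae_mem_isCompact (isCompact_sphere 0 r) hμ (by fun_prop)
    _ = ∑ _i : Fin n, ∫ x, ⟪b 0, x⟫ * g ⟪b 0, x⟫ ∂μ :=
        Finset.sum_congr rfl fun i _ ↦ integral_inner_sq_mul_deriv_inner (isCompact_sphere 0 r)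
          hμ hinv hu (b.norm_eq_one _) (b.inner_eq_zero (Fin.succ_ne_zero i).symm) hg
    _ = n * ∫ x, ⟪b 0, x⟫ * g ⟪b 0, x⟫ ∂μ := by simp

theorem integral_inner_pow_add_two [IsFiniteMeasure μ]
    (hμ : ∀ᵐ x ∂μ, x ∈ sphere 0 r) (hinv : ∀ e : E ≃ₗᵢ[ℝ] E, MeasurePreserving e μ μ)
    (hn : finrank ℝ E = n + 1) {u : E} (hu : ‖u‖ = 1) (k : ℕ) :
    (k + 1 + n) * ∫ x, ⟪u, x⟫ ^ (k + 2) ∂μ = (k + 1) * r ^ 2 * ∫ x, ⟪u, x⟫ ^ k ∂μ := by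
  have : FiniteDimensional ℝ E := .of_finrank_eq_succ hn
  have hint (j : ℕ) (c : ℝ) : Integrable (fun x ↦ c * ⟪u, x⟫ ^ j) μ :=
    integrable_of_continuous_of_ae_mem_isCompact (isCompact_sphere 0 r) hμ (by fun_prop)
  have hmain := integral_sq_sub_sq_inner_mul_deriv_inner hμ hinv hn hu
    (g := fun t ↦ t ^ (k + 1)) (by fun_prop)
  have hleft (x : E) : (r ^ 2 - ⟪u, x⟫ ^ 2) * deriv (fun t ↦ t ^ (k + 1)) ⟪u, x⟫ =
      (k + 1) * r ^ 2 * ⟪u, x⟫ ^ k - (k + 1) * ⟪u, x⟫ ^ (k + 2) := by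
    rw [deriv_pow_field, Nat.cast_succ, Nat.add_sub_cancel]
    ring
  simp only [hleft, ← pow_succ'] at hmain
  rw [integral_sub (hint _ _) (hint _ _), integral_const_mul, integral_const_mul] at hmain
  linear_combination -hmain

theorem integral_inner_pow_of_finrank_eq_three [IsProbabilityMeasure μ] (hr : 0 < r)
    (hμ : ∀ᵐ x ∂μ, x ∈ sphere 0 r) (hinv : ∀ e : E ≃ₗᵢ[ℝ] E, MeasurePreserving e μ μ)
    (hE : finrank ℝ E = 3) {u : E} (hu : ‖u‖ = 1) (k : ℕ) :
    ∫ x, ⟪u, x⟫ ^ k ∂μ = (r ^ (k + 1) - (-r) ^ (k + 1)) / ((r - -r) * (k + 1)) := by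
  induction k using Nat.twoStepInduction with
  | zero =>
    have : r + r ≠ 0 := by positivity
    simp [this]
  | one =>
    have : μ.IsNegInvariant := ⟨(hinv (.neg ℝ)).map_eq⟩
    simpa using integral_eq_zero_of_odd (μ := μ) fun x ↦ inner_neg_right u x
  | more k ih _ =>
    have hrec := integral_inner_pow_add_two hμ hinv hE hu k
    rw [ih] at hrec
    have hk : (k + 1 + (2 : ℕ) : ℝ) ≠ 0 := by positivity
    refine mul_left_cancel₀ hk (hrec.trans ?_)
    push_cast
    field_simp
    ring

theorem map_inner_eq_cond_Icc [IsProbabilityMeasure μ] (hr : 0 < r)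
    (hμ : ∀ᵐ x ∂μ, x ∈ sphere 0 r) (hinv : ∀ e : E ≃ₗᵢ[ℝ] E, MeasurePreserving e μ μ)
    (hE : finrank ℝ E = 3) {u : E} (hu : ‖u‖ = 1) :
    μ.map (fun x ↦ ⟪u, x⟫) = volume[|Icc (-r) r] := by
  have hmeas : AEMeasurable (fun x ↦ ⟪u, x⟫) μ := by fun_prop
  refine measure_ext_of_forall_integral_pow_eq (a := -r) (b := r) ?_
    (ProbabilityTheory.ae_cond_mem measurableSet_Icc) fun k ↦ ?_
  · refine (ae_map_iff hmeas measurableSet_Icc).2 (hμ.mono fun x hx ↦ abs_le.1 ?_)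
    simpa [hu, mem_sphere_zero_iff_norm.1 hx] using abs_real_inner_le_norm u x
  · rw [integral_map hmeas (by fun_prop), integral_pow_cond_Icc (neg_lt_self hr),
      integral_inner_pow_of_finrank_eq_three hr hμ hinv hE hu]

end InnerProductSpace

section Hausdorff

variable {E : Type*} [NormedAddCommGroup E] [InnerProductSpace ℝ E]

theorem ball_subset_orthogonalProjectionOnto_image_sphere {v : E} (hv : ‖v‖ = 1) (r : ℝ) :
    ball 0 r ⊆ (ℝ ∙ v)ᗮ.orthogonalProjectionOnto '' sphere (0 : E) r := by
  intro w hw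
  rw [mem_ball_zero_iff] at hw
  have hr : 0 ≤ r ^ 2 - ‖w‖ ^ 2 := by nlinarith [norm_nonneg w]
  refine ⟨w + √(r ^ 2 - ‖w‖ ^ 2) • v, ?_, ?_⟩
  · have horth : ⟪(w : E), √(r ^ 2 - ‖w‖ ^ 2) • v⟫ = 0 := by
      rw [inner_smul_right, Submodule.mem_orthogonal_singleton_iff_inner_left.1 w.2, mul_zero]
    rw [mem_sphere_zero_iff_norm, ← sq_eq_sq₀ (norm_nonneg _) ((norm_nonneg w).trans hw.le), sq,
      norm_add_sq_eq_norm_sq_add_norm_sq_real horth, ← sq, ← sq, norm_smul, hv, mul_one,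
      Real.norm_eq_abs, sq_abs, Real.sq_sqrt hr, Submodule.coe_norm, add_sub_cancel]
  · rw [map_add, map_smul, Submodule.orthogonalProjectionOnto_mem_subspace_eq_self,
      Submodule.orthogonalProjectionOnto_orthogonalComplement_singleton_eq_zero, smul_zero,
      add_zero]

variable [MeasurableSpace E] [BorelSpace E] {n : ℕ}

theorem isAddHaarMeasure_hausdorffMeasure_orthogonal_singleton (hn : finrank ℝ E = n + 1) {v : E}
    (hv : v ≠ 0) : (μH[n] : Measure (ℝ ∙ v)ᗮ).IsAddHaarMeasure := by
  have : Fact (finrank ℝ E = n + 1) := ⟨hn⟩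
  have : FiniteDimensional ℝ E := .of_finrank_eq_succ hn
  rw [← Submodule.finrank_orthogonal_span_singleton (𝕜 := ℝ) (n := n) hv]
  infer_instance

theorem hausdorffMeasure_sphere_pos (hn : finrank ℝ E = n + 1) {r : ℝ} (hr : 0 < r) :
    0 < μH[n] (sphere (0 : E) r) := by
  have : FiniteDimensional ℝ E := .of_finrank_eq_succ hn
  have : Nontrivial E := nontrivial_of_finrank_eq_succ hn
  obtain ⟨v, hv⟩ := exists_norm_eq E zero_le_one
  have := isAddHaarMeasure_hausdorffMeasure_orthogonal_singleton hn
    (norm_ne_zero_iff.1 (hv.trans_ne one_ne_zero))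
  calc 0 < μH[n] (ball (0 : (ℝ ∙ v)ᗮ) r) := measure_ball_pos _ _ hr
    _ ≤ μH[n] ((ℝ ∙ v)ᗮ.orthogonalProjectionOnto '' sphere (0 : E) r) :=
      measure_mono (ball_subset_orthogonalProjectionOnto_image_sphere hv r)
    _ ≤ μH[n] (sphere (0 : E) r) :=
      hausdorffMeasure_orthogonalProjectionOnto_le _ _ _ n.cast_nonneg

theorem hausdorffMeasure_image_stereoInvFun_lt_top (hn : finrank ℝ E = n + 1) {v : E}
    (hv : ‖v‖ = 1) (R : ℝ) : μH[n] ((fun w ↦ (stereoInvFun hv w : E)) '' closedBall 0 R) < ∞ := by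
  have : FiniteDimensional ℝ E := .of_finrank_eq_succ hn
  have := isAddHaarMeasure_hausdorffMeasure_orthogonal_singleton hn
    (norm_ne_zero_iff.1 (hv.trans_ne one_ne_zero))
  have hsmooth : ContDiff ℝ 1 fun w : (ℝ ∙ v)ᗮ ↦ (stereoInvFun hv w : E) :=
    contDiff_stereoInvFunAux.comp (ℝ ∙ v)ᗮ.subtypeL.contDiff
  obtain ⟨C, hC⟩ := hsmooth.contDiffOn.exists_lipschitzOnWith one_ne_zero
    (convex_closedBall 0 R) (isCompact_closedBall 0 R)
  exact (hC.hausdorffMeasure_image_le n.cast_nonneg).trans_lt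
    (ENNReal.mul_lt_top (by simp) measure_closedBall_lt_top)

theorem hausdorffMeasure_unit_sphere_lt_top (hn : finrank ℝ E = n + 1) :
    μH[n] (sphere (0 : E) 1) < ∞ := by
  have : FiniteDimensional ℝ E := .of_finrank_eq_succ hn
  refine (isCompact_sphere 0 1).measure_lt_top_of_nhdsWithin fun x hx ↦ ?_
  have hnorm : ‖-x‖ = 1 := by rwa [norm_neg, ← mem_sphere_zero_iff_norm]
  let chart := stereographic hnorm
  have hsource : ⟨x, hx⟩ ∈ chart.source := by
    rw [stereographic_source]
    exact ne_neg_of_mem_unit_sphere ℝ ⟨x, hx⟩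
  have hsymm : chart.symm 0 = ⟨x, hx⟩ := by
    rw [← chart.left_inv hsource]
    exact congrArg chart.symm (stereographic_neg_apply ⟨x, hx⟩).symm
  refine ⟨(fun w ↦ (chart.symm w : E)) '' closedBall 0 1, ?_,
    hausdorffMeasure_image_stereoInvFun_lt_top hn hnorm 1⟩
  rw [← image_image Subtype.val, ← mem_nhds_subtype_iff_nhdsWithin (a := ⟨x, hx⟩), ← hsymm]
  exact chart.symm.image_mem_nhds (by simp [chart]) (closedBall_mem_nhds _ one_pos)

theorem hausdorffMeasure_sphere_lt_top (hn : finrank ℝ E = n + 1) {r : ℝ} (hr : 0 < r) :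
    μH[n] (sphere (0 : E) r) < ∞ := by
  have hsphere : sphere (0 : E) r = r • sphere (0 : E) 1 := by
    rw [smul_sphere' hr.ne', smul_zero, Real.norm_of_nonneg hr.le, mul_one]
  rw [hsphere, Measure.hausdorffMeasure_smul₀ n.cast_nonneg hr.ne', ENNReal.smul_def, smul_eq_mul]
  exact ENNReal.mul_lt_top ENNReal.coe_lt_top (hausdorffMeasure_unit_sphere_lt_top hn)

theorem measurePreserving_cond_hausdorffMeasure_sphere (d r : ℝ) (e : E ≃ₗᵢ[ℝ] E) :
    MeasurePreserving e (μH[d][|sphere 0 r]) (μH[d][|sphere 0 r]) := by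
  have h := (e.toIsometryEquiv.measurePreserving_hausdorffMeasure d).restrict_preimage
    (s := sphere 0 r) isClosed_sphere.measurableSet
  rw [LinearIsometryEquiv.coe_toIsometryEquiv, e.preimage_sphere, map_zero] at h
  exact h.smul_measure _

end Hausdorff

theorem archimedes_projection_uniform_general {E : Type*} [NormedAddCommGroup E]
    [InnerProductSpace ℝ E] [MeasurableSpace E] [BorelSpace E] (hE : finrank ℝ E = 3) {u : E}
    (hu : ‖u‖ = 1) {r : ℝ} (hr : 0 < r) :
    Measure.map (fun x ↦ ⟪u, x⟫) (μH[2][|sphere 0 r]) = volume[|Icc (-r) r] := by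
  have hpos : μH[2] (sphere (0 : E) r) ≠ 0 := (hausdorffMeasure_sphere_pos hE hr).ne'
  have hfinite : μH[2] (sphere (0 : E) r) ≠ ∞ := (hausdorffMeasure_sphere_lt_top hE hr).ne
  have := ProbabilityTheory.cond_isProbabilityMeasure_of_finite hpos hfinite
  exact map_inner_eq_cond_Icc hr (ProbabilityTheory.ae_cond_mem isClosed_sphere.measurableSet)
    (measurePreserving_cond_hausdorffMeasure_sphere 2 r) hE hu

/-- **Archimedes' theorem.**
Let `V` be uniformly distributed on the sphere of radius `r > 0` in `ℝ³`
(normalized 2-dimensional Hausdorff measure on the sphere).  Then the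
coordinate `z = V 2` is uniformly distributed on `[−r, r]`: the pushforward of
the normalized surface measure under `x ↦ x 2` is the normalized Lebesgue
measure on `[−r, r]`. -/
theorem archimedes_projection_uniform (r : ℝ) (hr : 0 < r) :
    Measure.map (fun x : EuclideanSpace ℝ (Fin 3) => x 2)
        (((μH[2] : Measure (EuclideanSpace ℝ (Fin 3)))
            (sphere (0 : EuclideanSpace ℝ (Fin 3)) r))⁻¹
          • ((μH[2] : Measure (EuclideanSpace ℝ (Fin 3))).restrict
              (sphere (0 : EuclideanSpace ℝ (Fin 3)) r)))
      = (ENNReal.ofReal (2 * r))⁻¹ • (volume.restrict (Set.Icc (-r) r)) := by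
  simpa [ProbabilityTheory.cond, two_mul, EuclideanSpace.inner_single_left] using
    archimedes_projection_uniform_general (u := EuclideanSpace.single (2 : Fin 3) (1 : ℝ))
      (by simp) (by simp) hr
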